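/- Let A be a unital Banach algebra with a continuous algebra automorphism T : A → A. Fix integers M, N ≥ 0 and functions U_m : ℝ → A for −M ≤ m ≤ N. Let φ : ℝ → A be differentiable with φ(t) a unit for every t, satisfying φ'(t) = Σ_{m=−M}^{N} U_m(t)·T^m(φ(t)) for all t. Set σ⁻(t) := φ(t)·(T⁻¹(φ(t)))⁻¹, and define B⁻_m(t) ∈ A for all m ∈ ℤ by B⁻_{−1}(t) = 1 and B⁻_m(t) = T^m(σ⁻(t))·B⁻_{m−1}(t) for every m ∈ ℤ (for m < −1 this reads B⁻_{m−1}(t) = (T^m(σ⁻(t)))⁻¹·B⁻_m(t)). Then σ⁻ is differentiable and for all t: σ⁻'(t) = Σ_{m=−M}^{N} [ U_m(t)·B⁻_m(t) − σ⁻(t)·T⁻¹(U_m(t))·B⁻_{m−1}(t) ]. -/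

import Mathlib

/-!
Comparing the recurrence for `B` with `T ^ m σ * T ^ (m - 1) φ = T ^ m φ` shows that
`B m * T⁻¹ φ = T ^ m φ` for every integer `m`. Both `φ` and `T⁻¹ φ` have known derivatives, the
latter because `T⁻¹` is bounded and linear, so the noncommutative quotient rule yields
`σ' = φ' * (T⁻¹ φ)⁻¹ - σ * T⁻¹ φ' * (T⁻¹ φ)⁻¹`. In each summand of `φ'` and of `T⁻¹ φ'` the right
factor `(T⁻¹ φ)⁻¹` turns the iterate of `φ` into the corresponding `B`.
-/

theorem inv_smul_zpow_smul {G X : Type*} [Group G] [MulAction G X] (g : G) (m : ℤ) (x : X) :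
    g⁻¹ • g ^ m • x = g ^ (m - 1) • x := by
  rw [smul_smul, ← zpow_neg_one, ← zpow_add, neg_add_eq_sub]

theorem isUnit_smul_of_isUnit {G M : Type*} [Monoid G] [Monoid M] [MulDistribMulAction G M]
    (g : G) {x : M} (hx : IsUnit x) : IsUnit (g • x) :=
  hx.map (MulDistribMulAction.toMonoidHom M g)

section LatticeBell

variable {G M : Type*} [Group G] [Monoid M] [MulDistribMulAction G M] {g : G} {σ x : M}

/-- `B` is the two-sided sequence of second-type lattice Bell polynomials generated by `σ` under
the automorphism `g`. The recurrence is required at every integer in this division-free form, which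
determines `B` below the index `-1` when `σ` is a unit. -/
structure IsLatticeBell (g : G) (σ : M) (B : ℤ → M) : Prop where
  neg_one : B (-1) = 1
  eq_mul_sub_one (m : ℤ) : B m = g ^ m • σ * B (m - 1)

theorem zpow_smul_mul_zpow_sub_one_smul (h : σ * g⁻¹ • x = x) (m : ℤ) :
    g ^ m • σ * g ^ (m - 1) • x = g ^ m • x := by
  rw [zpow_sub_one, mul_smul, ← smul_mul', h]

theorem IsLatticeBell.mul_inv_smul {B : ℤ → M} (hB : IsLatticeBell g σ B) (hσ : IsUnit σ)
    (h : σ * g⁻¹ • x = x) (m : ℤ) : B m * g⁻¹ • x = g ^ m • x := by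
  induction m using Int.inductionOn' (b := -1) with
  | zero => rw [hB.neg_one, one_mul, zpow_neg_one]
  | succ k _ ih =>
    rw [hB.eq_mul_sub_one, add_sub_cancel_right, mul_assoc, ih]
    simpa only [add_sub_cancel_right] using zpow_smul_mul_zpow_sub_one_smul h (k + 1)
  | pred k _ ih =>
    apply (isUnit_smul_of_isUnit (g ^ k) hσ).mul_left_cancel
    rw [← mul_assoc, ← hB.eq_mul_sub_one, ih, zpow_smul_mul_zpow_sub_one_smul h]

end LatticeBell

section DressingFactor

variable {G R : Type*} [Group G] [MonoidWithZero R] [MulDistribMulAction G R] {g : G} {x : R}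

/-- The dressing factor of the second kind `x * (g⁻¹ • x)⁻¹` of `x` under the automorphism `g`.
It is meaningful for a unit `x`; otherwise `Ring.inverse` makes it `0`. -/
noncomputable def dressingFactor (g : G) (x : R) : R :=
  x * Ring.inverse (g⁻¹ • x)

theorem isUnit_dressingFactor (g : G) (hx : IsUnit x) : IsUnit (dressingFactor g x) :=
  hx.mul (isUnit_smul_of_isUnit g⁻¹ hx).ringInverse

theorem dressingFactor_mul_inv_smul (g : G) (hx : IsUnit x) :
    dressingFactor g x * g⁻¹ • x = x :=
  Ring.inverse_mul_cancel_right _ _ (isUnit_smul_of_isUnit g⁻¹ hx)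

theorem IsLatticeBell.eq_zpow_smul_mul_inverse {B : ℤ → R}
    (hB : IsLatticeBell g (dressingFactor g x) B) (hx : IsUnit x) (m : ℤ) :
    B m = g ^ m • x * Ring.inverse (g⁻¹ • x) :=
  (Ring.eq_mul_inverse_iff_mul_eq _ _ _ (isUnit_smul_of_isUnit g⁻¹ hx)).2 <|
    hB.mul_inv_smul (isUnit_dressingFactor g hx) (dressingFactor_mul_inv_smul g hx) m

end DressingFactor

theorem hasDerivAt_mul_ringInverse {𝕜 A : Type*} [NontriviallyNormedField 𝕜] [NormedRing A]
    [NormedAlgebra 𝕜 A] [HasSummableGeomSeries A] {φ ψ : 𝕜 → A} {φ' ψ' : A} {t : 𝕜}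
    (hφ : HasDerivAt φ φ' t) (hψ : HasDerivAt ψ ψ' t) (hψu : IsUnit (ψ t)) :
    HasDerivAt (fun s => φ s * Ring.inverse (ψ s))
      (φ' * Ring.inverse (ψ t) - φ t * Ring.inverse (ψ t) * ψ' * Ring.inverse (ψ t)) t := by
  obtain ⟨u, hu⟩ := hψu
  have hinv := hasFDerivAt_ringInverse (𝕜 := 𝕜) u
  rw [hu] at hinv
  refine (hφ.mul (hinv.comp_hasDerivAt t hψ)).congr_deriv ?_
  simp [← hu, mul_assoc, sub_eq_add_neg]

theorem isBoundedLinearMap_symm_of_continuous {E F : Type*} [NormedAddCommGroup E]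
    [NormedSpace ℝ E] [CompleteSpace E] [NormedAddCommGroup F] [NormedSpace ℝ F] [CompleteSpace F]
    (e : E ≃+ F) (he : Continuous e) : IsBoundedLinearMap ℝ e.symm :=
  let eLin : E ≃ₗ[ℝ] F := { e, (e : E →+ F).toRealLinearMap he with }
  (eLin.toContinuousLinearEquivOfContinuous he).symm.toContinuousLinearMap.isBoundedLinearMap

theorem dressing_factor_evolution_second_kind_general
    {𝕜 A G : Type*} [NontriviallyNormedField 𝕜] [NormedRing A] [NormedAlgebra 𝕜 A]
    [HasSummableGeomSeries A] [Group G] [MulSemiringAction G A]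
    {g : G} (hg : IsBoundedLinearMap 𝕜 fun x : A => g⁻¹ • x) (I : Finset ℤ) {U B : ℤ → A}
    {φ : 𝕜 → A} {t : 𝕜} (hu : IsUnit (φ t))
    (hφ : HasDerivAt φ (∑ m ∈ I, U m * g ^ m • φ t) t)
    (hB : IsLatticeBell g (dressingFactor g (φ t)) B) :
    HasDerivAt (fun s => dressingFactor g (φ s))
      (∑ m ∈ I, (U m * B m - dressingFactor g (φ t) * g⁻¹ • U m * B (m - 1))) t := by
  have hψ : HasDerivAt (fun s => g⁻¹ • φ s) (∑ m ∈ I, g⁻¹ • U m * g ^ (m - 1) • φ t) t := by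
    refine (hg.hasFDerivAt.comp_hasDerivAt t hφ).congr_deriv ?_
    change g⁻¹ • ∑ m ∈ I, U m * g ^ m • φ t = _
    simp only [Finset.smul_sum, smul_mul', inv_smul_zpow_smul]
  refine (hasDerivAt_mul_ringInverse hφ hψ (isUnit_smul_of_isUnit g⁻¹ hu)).congr_deriv ?_
  have hφB : (∑ m ∈ I, U m * g ^ m • φ t) * Ring.inverse (g⁻¹ • φ t) = ∑ m ∈ I, U m * B m := by
    simp only [hB.eq_zpow_smul_mul_inverse hu, Finset.sum_mul, mul_assoc]
  have hψB : (∑ m ∈ I, g⁻¹ • U m * g ^ (m - 1) • φ t) * Ring.inverse (g⁻¹ • φ t) =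
      ∑ m ∈ I, g⁻¹ • U m * B (m - 1) := by
    simp only [hB.eq_zpow_smul_mul_inverse hu, Finset.sum_mul, mul_assoc]
  rw [hφB, ← dressingFactor, mul_assoc, hψB, Finset.mul_sum, ← Finset.sum_sub_distrib]
  simp only [mul_assoc]

/-- In a unital Banach algebra with continuous automorphism `T`, if a
unit-valued differentiable `φ` solves `φ' = Σ_{m=-M}^{N} U_m · T^m φ`, then the
second-kind dressing factor `σ⁻ = φ·(T⁻¹φ)⁻¹` is differentiable with
`σ⁻' = Σ_{m=-M}^{N} [U_m · B⁻_m − σ⁻ · T⁻¹(U_m) · B⁻_{m−1}]`, where the second-type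
lattice Bell polynomials `B⁻_m`, `m ∈ ℤ`, satisfy `B⁻_{−1} = 1` and
`B⁻_m = T^m(σ⁻)·B⁻_{m−1}`. -/
theorem dressing_factor_evolution_second_kind
    {A : Type*} [NormedRing A] [NormedAlgebra ℝ A] [CompleteSpace A]
    (T : A ≃+* A) (hT : Continuous T) (M N : ℕ) (U : ℤ → ℝ → A)
    (φ : ℝ → A) (hφu : ∀ t, IsUnit (φ t))
    (hφ : ∀ t, HasDerivAt φ
      (∑ m ∈ Finset.Icc (-(M : ℤ)) (N : ℤ), U m t * (T ^ m) (φ t)) t)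
    (σm : ℝ → A) (hσm : ∀ t, σm t = φ t * Ring.inverse (T.symm (φ t)))
    (B : ℤ → ℝ → A) (hBinit : ∀ t, B (-1) t = 1)
    (hBrec : ∀ (m : ℤ) (t : ℝ), B m t = (T ^ m) (σm t) * B (m - 1) t) :
    ∀ t, HasDerivAt σm
      (∑ m ∈ Finset.Icc (-(M : ℤ)) (N : ℤ),
        (U m t * B m t - σm t * T.symm (U m t) * B (m - 1) t)) t := by
  intro t
  obtain rfl : σm = fun s => dressingFactor (G := RingAut A) T (φ s) := funext hσm
  exact dressing_factor_evolution_second_kind_general (G := RingAut A) (g := T)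
    (isBoundedLinearMap_symm_of_continuous T.toAddEquiv hT) _ (hφu t) (hφ t)
    ⟨hBinit t, fun m => hBrec m t⟩
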